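/- Fix (r,s) ∈ ℂ² and for τ ∈ ℍ set a₁(τ) = r + sτ; assume a₁(τ) ∉ Λ_τ. Define f(z;τ) = e^{2za₁η₁(τ) − 4πisz} σ(z−a₁|τ)/σ(z+a₁|τ). Then for z ∉ ±a₁ + Λ_τ, ∂/∂τ log f(z;τ) = (i/(4π))[ζ(z+a₁|τ) − ζ(z−a₁|τ) − 2η₁(τ)a₁ + 4πis]·[ζ(z−a₁|τ) + ζ(z+a₁|τ) − 2zη₁(τ)] + (i/(4π))[℘(z−a₁|τ) − ℘(z+a₁|τ)]. -/

import Mathlib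

open Complex Filter Topology Asymptotics

noncomputable section

/-- membership in the lattice `Λ_τ = ℤ + τℤ`. -/
def InLattice (τ z : ℂ) : Prop := ∃ m n : ℤ, z = (m : ℂ) + (n : ℂ) * τ

/-- the half-period generators `ω₀ = 0, ω₁ = 1, ω₂ = τ, ω₃ = 1 + τ`. -/
def halfp (τ : ℂ) : Fin 4 → ℂ := ![0, 1, τ, 1 + τ]

/-- the Weierstrass elliptic function `℘(z|τ)`. -/
def wp (τ z : ℂ) : ℂ :=
  z⁻¹ ^ 2 + ∑' w : {w : ℤ × ℤ // w ≠ 0},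
    ((z - ((w.1.1 : ℂ) + (w.1.2 : ℂ) * τ))⁻¹ ^ 2 - ((w.1.1 : ℂ) + (w.1.2 : ℂ) * τ)⁻¹ ^ 2)

/-- `℘′(z|τ)`, the `z`-derivative of `℘`. -/
def wpd (τ z : ℂ) : ℂ := deriv (wp τ) z

/-- `℘″(z|τ)`. -/
def wpdd (τ z : ℂ) : ℂ := deriv (wpd τ) z

def e1 (τ : ℂ) : ℂ := wp τ (1 / 2)
def e2 (τ : ℂ) : ℂ := wp τ (τ / 2)
def e3 (τ : ℂ) : ℂ := wp τ ((1 + τ) / 2)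

def g2 (τ : ℂ) : ℂ := -4 * (e1 τ * e2 τ + e1 τ * e3 τ + e2 τ * e3 τ)

/-- `zeta` is the Weierstrass zeta function: for each `τ ∈ ℍ`, `zeta τ` is odd, satisfies
`∂ζ/∂z = -℘` off the lattice, and `ζ(z|τ) - 1/z → 0` as `z → 0`. -/
def IsWeierstrassZeta (zeta : ℂ → ℂ → ℂ) : Prop :=
  ∀ τ : ℂ, 0 < τ.im →
    (∀ z : ℂ, zeta τ (-z) = - zeta τ z) ∧
    (∀ z : ℂ, ¬ InLattice τ z → HasDerivAt (zeta τ) (- wp τ z) z) ∧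
    Tendsto (fun z => zeta τ z - z⁻¹) (𝓝[≠] (0 : ℂ)) (𝓝 0)

/-- `eta1 τ = ζ(z+1|τ) - ζ(z|τ)` is the first quasi-period. -/
def IsEta1 (zeta : ℂ → ℂ → ℂ) (eta1 : ℂ → ℂ) : Prop :=
  ∀ τ : ℂ, 0 < τ.im → ∀ z : ℂ, ¬ InLattice τ z →
    eta1 τ = zeta τ (z + 1) - zeta τ z

/-- `eta2 τ = ζ(z+τ|τ) - ζ(z|τ)` is the second quasi-period. -/
def IsEta2 (zeta : ℂ → ℂ → ℂ) (eta2 : ℂ → ℂ) : Prop :=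
  ∀ τ : ℂ, 0 < τ.im → ∀ z : ℂ, ¬ InLattice τ z →
    eta2 τ = zeta τ (z + τ) - zeta τ z

/-- `sigma` is the Weierstrass sigma function: entire, odd, with
`∂/∂z log σ = ζ` off the lattice and `σ(z|τ)/z → 1` as `z → 0`. -/
def IsWeierstrassSigma (zeta sigma : ℂ → ℂ → ℂ) : Prop :=
  ∀ τ : ℂ, 0 < τ.im →
    (∀ z : ℂ, sigma τ (-z) = - sigma τ z) ∧
    Differentiable ℂ (sigma τ) ∧
    (∀ z : ℂ, ¬ InLattice τ z → HasDerivAt (sigma τ) (zeta τ z * sigma τ z) z) ∧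
    Tendsto (fun z => sigma τ z / z) (𝓝[≠] (0 : ℂ)) (𝓝 1)

/-- the Hamiltonian system (142) for `(p(τ), A(τ))` on `V`. -/
def HamSystem (n : Fin 4 → ℂ) (zeta : ℂ → ℂ → ℂ) (eta1 : ℂ → ℂ)
    (V : Set ℂ) (p A : ℂ → ℂ) : Prop :=
  ∀ τ ∈ V,
    HasDerivAt p ((-Complex.I / (4 * (Real.pi : ℂ))) *
      (2 * A τ - zeta τ (2 * p τ) + 2 * p τ * eta1 τ)) τ ∧
    HasDerivAt A ((Complex.I / (4 * (Real.pi : ℂ))) *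
      ((2 * wp τ (2 * p τ) + 2 * eta1 τ) * A τ - (3 / 2) * wpd τ (2 * p τ)
        - ∑ k : Fin 4, n k * (n k + 1) * wpd τ (p τ + halfp τ k / 2))) τ

/-- the generalized Lamé potential `I(z;τ)`. -/
def Ipot (n : Fin 4 → ℂ) (zeta : ℂ → ℂ → ℂ) (A B p τ z : ℂ) : ℂ :=
  (∑ k : Fin 4, n k * (n k + 1) * wp τ (z + halfp τ k / 2))
    + (3 / 4) * (wp τ (z + p) + wp τ (z - p))
    + A * (zeta τ (z + p) - zeta τ (z - p)) + B

end

/-!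
By Liouville's theorem for theta functions, `σ(z|τ) exp (-η₁ z² / 2)` is a multiple, constant in
`z`, of the odd theta function `Θ(z|τ)`, so that `f` is a constant times `Θ(z - a₁) / Θ(z + a₁)`:
the unknown dependence of the multiple on `τ` cancels. The heat equation `4πi ∂Θ/∂τ = Θ''` turns the
`τ`-derivative into `z`-derivatives, and off the lattice `Θ'/Θ = ζ - η₁ z` and
`Θ''/Θ = (ζ - η₁ z)² - ℘ - η₁`.
-/

section AnalyticOrder

variable {𝕜 : Type*} [NontriviallyNormedField 𝕜]

theorem exists_analyticOnNhd_mul_eq {U : Set 𝕜} {f g : 𝕜 → 𝕜} (hf : AnalyticOnNhd 𝕜 f U)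
    (hg : AnalyticOnNhd 𝕜 g U) (h : ∀ z ∈ U, analyticOrderAt g z ≤ analyticOrderAt f z) :
    ∃ q : 𝕜 → 𝕜, AnalyticOnNhd 𝕜 q U ∧ Set.EqOn f (q * g) U := by
  have hfg : MeromorphicOn (f / g) U := hf.meromorphicOn.div hg.meromorphicOn
  have hq : AnalyticOnNhd 𝕜 (toMeromorphicNFOn (f / g) U) U := by
    intro z hz
    rw [← (meromorphicNFOn_toMeromorphicNFOn (f / g) U hz).meromorphicOrderAt_nonneg_iff_analyticAt,
      meromorphicOrderAt_toMeromorphicNFOn hfg hz,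
      meromorphicOrderAt_div (hf z hz).meromorphicAt (hg z hz).meromorphicAt]
    have horder : meromorphicOrderAt g z ≤ meromorphicOrderAt f z := by
      rw [(hf z hz).meromorphicOrderAt_eq, (hg z hz).meromorphicOrderAt_eq]
      exact ENat.monotone_map_iff.2 Nat.mono_cast (h z hz)
    calc 0 ≤ meromorphicOrderAt g z - meromorphicOrderAt g z :=
          LinearOrderedAddCommGroupWithTop.sub_self_nonneg
      _ ≤ meromorphicOrderAt f z - meromorphicOrderAt g z := by
          rw [sub_eq_add_neg, sub_eq_add_neg]
          gcongr
  refine ⟨_, hq, fun z hz ↦ ?_⟩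
  obtain hg0 | hg0 := (hg z hz).eventually_eq_zero_or_eventually_ne_zero
  · have hf0 : ∀ᶠ w in 𝓝 z, f w = 0 := by
      rw [← analyticOrderAt_eq_top, ← top_le_iff] at hg0 ⊢
      exact hg0.trans (h z hz)
    rw [hf0.self_of_nhds, Pi.mul_apply, hg0.self_of_nhds, mul_zero]
  · have hne : f =ᶠ[𝓝[≠] z] toMeromorphicNFOn (f / g) U * g := by
      filter_upwards [hfg.toMeromorphicNFOn_eq_self_on_nhdsNE hz, hg0] with w hw hgw
      rw [Pi.mul_apply, hw, Pi.div_apply, div_mul_cancel₀ _ hgw]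
    exact (((hf z hz).continuousAt.eventuallyEq_nhds_iff_eventuallyEq_nhdsNE
      ((hq z hz).mul (hg z hz)).continuousAt).1 hne).self_of_nhds

theorem eventually_eq_zero_of_deriv_eq_mul [CompleteSpace 𝕜] [CharZero 𝕜] {f φ : 𝕜 → 𝕜} {z : 𝕜}
    (hf : AnalyticAt 𝕜 f z) (hφ : AnalyticAt 𝕜 φ z)
    (h : deriv f =ᶠ[𝓝 z] φ * f) (hz : f z = 0) :
    ∀ᶠ w in 𝓝 z, f w = 0 := by
  rw [← analyticOrderAt_eq_top]
  by_contra htop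
  have horder := hf.analyticOrderAt_deriv_add_one
  simp only [hz, sub_zero] at horder
  rw [analyticOrderAt_congr h, analyticOrderAt_mul hφ hf] at horder
  have hle : analyticOrderAt f z + 1 ≤ analyticOrderAt f z := by
    conv_rhs => rw [← horder]
    gcongr
    exact le_add_self
  exact hle.not_gt (ENat.lt_add_one_iff htop |>.2 le_rfl)

end AnalyticOrder

section JacobiTheta

variable {τ : ℂ}

theorem jacobiTheta₂_fderiv_fst (z : ℂ) (hτ : 0 < τ.im) :
    jacobiTheta₂_fderiv z τ (1, 0) = jacobiTheta₂' z τ := by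
  have h := (hasFDerivAt_jacobiTheta₂ z hτ).comp_hasDerivAt z
    ((hasDerivAt_id z).prodMk (hasDerivAt_const z τ))
  exact h.unique (hasDerivAt_jacobiTheta₂_fst z hτ)

theorem hasDerivAt_jacobiTheta₂'_term_fst (n : ℤ) (z τ : ℂ) :
    HasDerivAt (jacobiTheta₂'_term n · τ)
      (4 * Real.pi * I * jacobiTheta₂_term_fderiv n z τ (0, 1)) z := by
  have h : HasDerivAt (fun w : ℂ ↦ 2 * Real.pi * I * n * w + Real.pi * I * n ^ 2 * τ)
      (2 * Real.pi * I * n) z := by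
    simpa using ((hasDerivAt_id z).const_mul (2 * Real.pi * I * n : ℂ)).add_const
      (Real.pi * I * n ^ 2 * τ : ℂ)
  refine (h.cexp.const_mul (2 * Real.pi * I * n : ℂ)).congr_deriv ?_
  simp only [jacobiTheta₂_term_fderiv, smul_apply, add_apply,
    ContinuousLinearMap.coe_fst', ContinuousLinearMap.coe_snd', smul_eq_mul, mul_zero, mul_one,
    zero_add]
  ring

theorem hasDerivAt_jacobiTheta₂'_fst (z : ℂ) (hτ : 0 < τ.im) :
    HasDerivAt (jacobiTheta₂' · τ) (4 * Real.pi * I * jacobiTheta₂_fderiv z τ (0, 1)) z := by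
  obtain ⟨S, hz⟩ := exists_gt |z.im|
  have hU : IsOpen {w : ℂ | |w.im| < S} := isOpen_lt (by fun_prop) continuous_const
  have hsummable : Summable fun n : ℤ ↦
      2 * Real.pi * |(n : ℝ)| * Real.exp (-Real.pi * (τ.im * n ^ 2 - 2 * S * |(n : ℝ)|)) := by
    simpa only [mul_assoc, pow_one, Int.cast_abs] using
      (summable_pow_mul_jacobiTheta₂_term_bound S hτ 1).mul_left (2 * Real.pi)
  have hbound (n : ℤ) (w : ℂ) (hw : |w.im| < S) : ‖jacobiTheta₂'_term n w τ‖ ≤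
      2 * Real.pi * |(n : ℝ)| * Real.exp (-Real.pi * (τ.im * n ^ 2 - 2 * S * |(n : ℝ)|)) := by
    simpa only [Int.cast_abs] using norm_jacobiTheta₂'_term_le hτ hw.le le_rfl n
  have hdiff (n : ℤ) : DifferentiableOn ℂ (jacobiTheta₂'_term n · τ) {w : ℂ | |w.im| < S} :=
    fun w _ ↦ (hasDerivAt_jacobiTheta₂'_term_fst n w τ).differentiableAt.differentiableWithinAt
  have hderiv := hasSum_deriv_of_summable_norm hsummable hdiff hU hbound hz
  simp only [(hasDerivAt_jacobiTheta₂'_term_fst _ z τ).deriv] at hderiv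
  have hfderiv := ((ContinuousLinearMap.apply ℂ ℂ ((0, 1) : ℂ × ℂ)).hasSum
    (hasSum_jacobiTheta₂_term_fderiv z hτ)).mul_left (4 * Real.pi * I : ℂ)
  have hdiff_tsum := differentiableOn_tsum_of_summable_norm hsummable hdiff hU hbound
  exact (hdiff_tsum.differentiableAt (hU.mem_nhds hz)).hasDerivAt.congr_deriv
    (hderiv.unique hfderiv)

theorem integral_jacobiTheta₂_term {n : ℤ} (hn : n ≠ 0) (τ : ℂ) :
    ∫ x in (0 : ℝ)..1, jacobiTheta₂_term n x τ = 0 := by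
  have hc : (2 * Real.pi * I * n : ℂ) ≠ 0 := by simp [hn, Real.pi_ne_zero]
  have hexp : cexp (2 * Real.pi * I * n) = 1 := by
    rw [mul_comm, exp_int_mul_two_pi_mul_I]
  simp only [jacobiTheta₂_term, Complex.exp_add]
  rw [intervalIntegral.integral_mul_const, integral_exp_mul_complex hc]
  simp [hexp]

theorem integral_jacobiTheta₂ (hτ : 0 < τ.im) : ∫ x in (0 : ℝ)..1, jacobiTheta₂ x τ = 1 := by
  have hsum : HasSum (fun n : ℤ ↦ ∫ x in (0 : ℝ)..1, jacobiTheta₂_term n x τ)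
      (∫ x in (0 : ℝ)..1, jacobiTheta₂ x τ) := by
    refine intervalIntegral.hasSum_integral_of_dominated_convergence
      (fun n _ ↦ Real.exp (-Real.pi * (τ.im * n ^ 2 - 2 * 0 * |n|)))
      (fun n ↦ ?_) (fun n ↦ .of_forall fun x _ ↦ ?_) (.of_forall fun x _ ↦ ?_)
      intervalIntegrable_const (.of_forall fun x _ ↦ hasSum_jacobiTheta₂_term x hτ)
    · unfold jacobiTheta₂_term
      exact Continuous.aestronglyMeasurable (by fun_prop)
    · exact norm_jacobiTheta₂_term_le hτ (by simp) le_rfl n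
    · simpa using summable_pow_mul_jacobiTheta₂_term_bound 0 hτ 0
  rw [hsum.unique (hasSum_single 0 fun n hn ↦ integral_jacobiTheta₂_term hn τ)]
  simp [jacobiTheta₂_term]

theorem exists_jacobiTheta₂_ne_zero (hτ : 0 < τ.im) : ∃ z, jacobiTheta₂ z τ ≠ 0 := by
  by_contra! h
  simpa [h] using integral_jacobiTheta₂ hτ

end JacobiTheta

/-- The odd Jacobi theta function `∑ (-1)ⁿ exp (πi (n + 1/2)² τ + 2πi (n + 1/2) z)` (up to a factor
`i` or `-i`, depending on the author, this is `θ₁(πz)`), which vanishes exactly on the lattice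
`ℤ + ℤτ`. -/
noncomputable def oddTheta (τ z : ℂ) : ℂ :=
  cexp (Real.pi * I * z + Real.pi * I * τ / 4) * jacobiTheta₂ (z + (1 + τ) / 2) τ

section OddTheta

variable {τ : ℂ}

theorem oddTheta_add_one (τ z : ℂ) : oddTheta τ (z + 1) = -oddTheta τ z := by
  rw [oddTheta, oddTheta, add_right_comm z 1, jacobiTheta₂_add_left,
    show Real.pi * I * (z + 1) + Real.pi * I * τ / 4 =
      Real.pi * I * z + Real.pi * I * τ / 4 + Real.pi * I by ring, exp_add_pi_mul_I, neg_mul]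

theorem oddTheta_add_tau (τ z : ℂ) :
    oddTheta τ (z + τ) = -(cexp (-(2 * Real.pi * I * (z + τ / 2))) * oddTheta τ z) := by
  rw [oddTheta, oddTheta, add_right_comm z τ, jacobiTheta₂_add_left', ← mul_assoc, ← mul_assoc,
    ← Complex.exp_add, ← Complex.exp_add, ← neg_mul,
    show Real.pi * I * (z + τ) + Real.pi * I * τ / 4 +
      -Real.pi * I * (τ + 2 * (z + (1 + τ) / 2)) = -(2 * Real.pi * I * (z + τ / 2)) +
      (Real.pi * I * z + Real.pi * I * τ / 4) - Real.pi * I by ring, exp_sub_pi_mul_I]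

theorem oddTheta_zero (τ : ℂ) : oddTheta τ 0 = 0 := by
  have h := jacobiTheta₂_add_left' (-((1 + τ) / 2)) τ
  rw [← jacobiTheta₂_add_left, show -((1 + τ) / 2) + τ + 1 = (1 + τ) / 2 by ring,
    jacobiTheta₂_neg_left, show -Real.pi * I * (τ + 2 * -((1 + τ) / 2)) = Real.pi * I by ring,
    exp_pi_mul_I, neg_one_mul, self_eq_neg] at h
  rw [oddTheta, zero_add, h, mul_zero]

theorem oddTheta_eq_zero {z : ℂ} (hz : InLattice τ z) : oddTheta τ z = 0 := by
  obtain ⟨m, n, rfl⟩ := hz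
  have h_one : Function.Periodic (oddTheta τ · = 0) 1 := fun z ↦ by simp [oddTheta_add_one]
  have h_tau : Function.Periodic (oddTheta τ · = 0) τ := fun z ↦ by simp [oddTheta_add_tau]
  have h := (h_tau.int_mul n (0 + m * 1)).trans (h_one.int_mul m 0)
  rw [zero_add, mul_one] at h
  exact h.mpr (oddTheta_zero τ)

theorem exists_oddTheta_ne_zero (hτ : 0 < τ.im) : ∃ z, oddTheta τ z ≠ 0 := by
  obtain ⟨z, hz⟩ := exists_jacobiTheta₂_ne_zero hτ
  exact ⟨z - (1 + τ) / 2, by simpa [oddTheta] using hz⟩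

theorem hasDerivAt_oddTheta (hτ : 0 < τ.im) (z : ℂ) :
    HasDerivAt (oddTheta τ) (cexp (Real.pi * I * z + Real.pi * I * τ / 4) *
      (Real.pi * I * jacobiTheta₂ (z + (1 + τ) / 2) τ + jacobiTheta₂' (z + (1 + τ) / 2) τ)) z := by
  have hlin : HasDerivAt (fun w : ℂ ↦ Real.pi * I * w + Real.pi * I * τ / 4) (Real.pi * I) z := by
    simpa using ((hasDerivAt_id z).const_mul (Real.pi * I : ℂ)).add_const (Real.pi * I * τ / 4 : ℂ)
  refine (hlin.cexp.mul ((hasDerivAt_jacobiTheta₂_fst _ hτ).comp_add_const z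
    ((1 + τ) / 2))).congr_deriv ?_
  ring

theorem differentiable_oddTheta (hτ : 0 < τ.im) : Differentiable ℂ (oddTheta τ) :=
  fun z ↦ (hasDerivAt_oddTheta hτ z).differentiableAt

theorem deriv_deriv_oddTheta (hτ : 0 < τ.im) (z : ℂ) :
    deriv (deriv (oddTheta τ)) z = cexp (Real.pi * I * z + Real.pi * I * τ / 4) *
      ((Real.pi * I) ^ 2 * jacobiTheta₂ (z + (1 + τ) / 2) τ
        + 2 * Real.pi * I * jacobiTheta₂' (z + (1 + τ) / 2) τ
        + 4 * Real.pi * I * jacobiTheta₂_fderiv (z + (1 + τ) / 2) τ (0, 1)) := by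
  have hlin : HasDerivAt (fun w : ℂ ↦ Real.pi * I * w + Real.pi * I * τ / 4) (Real.pi * I) z := by
    simpa using ((hasDerivAt_id z).const_mul (Real.pi * I : ℂ)).add_const (Real.pi * I * τ / 4 : ℂ)
  have hθ := ((hasDerivAt_jacobiTheta₂_fst _ hτ).comp_add_const z ((1 + τ) / 2)).const_mul
    (Real.pi * I : ℂ)
  have hθ' := (hasDerivAt_jacobiTheta₂'_fst _ hτ).comp_add_const z ((1 + τ) / 2)
  rw [funext fun w ↦ (hasDerivAt_oddTheta hτ w).deriv]
  refine ((hlin.cexp.mul (hθ.add hθ')).congr_deriv ?_).deriv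
  simp only [Pi.add_apply]
  ring

theorem hasDerivAt_oddTheta_comp (hτ : 0 < τ.im) {w : ℂ → ℂ} {w' : ℂ} (hw : HasDerivAt w w' τ) :
    HasDerivAt (fun t ↦ oddTheta t (w t))
      (w' * deriv (oddTheta τ) (w τ) + deriv (deriv (oddTheta τ)) (w τ) / (4 * Real.pi * I)) τ := by
  have hexp : HasDerivAt (fun t : ℂ ↦ Real.pi * I * w t + Real.pi * I * t / 4)
      (Real.pi * I * w' + Real.pi * I / 4) τ := by
    refine (hw.const_mul (Real.pi * I : ℂ)).add ?_
    simpa using ((hasDerivAt_id τ).const_mul (Real.pi * I : ℂ)).div_const 4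
  have hpair : HasDerivAt (fun t : ℂ ↦ (w t + (1 + t) / 2, t)) (w' + 1 / 2, 1) τ :=
    (hw.add (((hasDerivAt_id τ).const_add 1).div_const 2)).prodMk (hasDerivAt_id τ)
  have hθ := HasFDerivAt.comp_hasDerivAt (f := fun t : ℂ ↦ (w t + (1 + t) / 2, t)) τ
    (hasFDerivAt_jacobiTheta₂ (w τ + (1 + τ) / 2) hτ) hpair
  refine (hexp.cexp.mul hθ).congr_deriv ?_
  have hdir : ((w' + 1 / 2, 1) : ℂ × ℂ) = (w' + 1 / 2) • (1, 0) + (0, 1) := by simp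
  rw [hdir, map_add, map_smul, jacobiTheta₂_fderiv_fst _ hτ, (hasDerivAt_oddTheta hτ _).deriv,
    deriv_deriv_oddTheta hτ]
  simp only [Function.comp_apply, smul_eq_mul]
  field_simp
  ring

end OddTheta

section Lattice

variable {τ : ℂ}

/-- The pair of periods `(1, τ)`, through which Mathlib's theory of the lattice of a `PeriodPair`
and of its Weierstrass function applies to `InLattice τ` and `wp τ`. -/
def upperHalfPeriodPair (hτ : 0 < τ.im) : PeriodPair where
  ω₁ := 1
  ω₂ := τ
  indep := by
    refine LinearIndependent.pair_iff.2 fun s t h ↦ ?_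
    have him : t = 0 := by simpa [hτ.ne'] using congrArg Complex.im h
    have hre : s = 0 := by simpa [him] using congrArg Complex.re h
    exact ⟨hre, him⟩

theorem mem_lattice_upperHalfPeriodPair (hτ : 0 < τ.im) {z : ℂ} :
    z ∈ (upperHalfPeriodPair hτ).lattice ↔ InLattice τ z := by
  simp only [PeriodPair.mem_lattice, InLattice, upperHalfPeriodPair, mul_one, eq_comm]

theorem wp_eq_weierstrassP (hτ : 0 < τ.im) (z : ℂ) :
    wp τ z = (upperHalfPeriodPair hτ).weierstrassP z := by
  set L := upperHalfPeriodPair hτ with hL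
  have hsum := (L.latticeEquivProd.symm.toEquiv.hasSum_iff).2 (L.hasSum_weierstrassP z)
  rw [← hsum.tsum_eq, ← hsum.summable.tsum_subtype_add_tsum_subtype_compl {0}, tsum_singleton, wp]
  simp only [Function.comp_apply, LinearEquiv.coe_toEquiv, PeriodPair.latticeEquiv_symm_apply]
  congr 1
  · simp
  · exact tsum_congr fun ω ↦ by simp [hL, upperHalfPeriodPair]

theorem InLattice.wp_add (hτ : 0 < τ.im) {ω : ℂ} (hω : InLattice τ ω) (z : ℂ) :
    wp τ (z + ω) = wp τ z := by
  rw [wp_eq_weierstrassP hτ, wp_eq_weierstrassP hτ]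
  exact (upperHalfPeriodPair hτ).weierstrassP_add_coe z
    ⟨ω, (mem_lattice_upperHalfPeriodPair hτ).2 hω⟩

theorem InLattice.add_iff {ω : ℂ} (hω : InLattice τ ω) (z : ℂ) :
    InLattice τ (z + ω) ↔ InLattice τ z := by
  obtain ⟨a, b, rfl⟩ := hω
  constructor
  · rintro ⟨m, n, h⟩
    exact ⟨m - a, n - b, by push_cast; linear_combination h⟩
  · rintro ⟨m, n, rfl⟩
    exact ⟨m + a, n + b, by push_cast; ring⟩

theorem inLattice_one (τ : ℂ) : InLattice τ 1 := ⟨1, 0, by simp⟩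

theorem inLattice_tau (τ : ℂ) : InLattice τ τ := ⟨0, 1, by simp⟩

theorem not_inLattice_one_div_two (hτ : 0 < τ.im) : ¬ InLattice τ (1 / 2) :=
  fun h ↦ (upperHalfPeriodPair hτ).ω₁_div_two_notMem_lattice
    ((mem_lattice_upperHalfPeriodPair hτ).2 h)

theorem not_inLattice_tau_div_two (hτ : 0 < τ.im) : ¬ InLattice τ (τ / 2) :=
  fun h ↦ (upperHalfPeriodPair hτ).ω₂_div_two_notMem_lattice
    ((mem_lattice_upperHalfPeriodPair hτ).2 h)

theorem isOpen_setOf_not_inLattice (hτ : 0 < τ.im) : IsOpen {z | ¬ InLattice τ z} := by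
  simp_rw [← mem_lattice_upperHalfPeriodPair hτ]
  exact (upperHalfPeriodPair hτ).isClosed_lattice.isOpen_compl

theorem countable_setOf_inLattice (τ : ℂ) : {z | InLattice τ z}.Countable := by
  refine (Set.countable_range fun p : ℤ × ℤ ↦ (p.1 + p.2 * τ : ℂ)).mono ?_
  rintro z ⟨m, n, rfl⟩
  exact ⟨(m, n), rfl⟩

theorem isPreconnected_setOf_not_inLattice (τ : ℂ) : IsPreconnected {z | ¬ InLattice τ z} :=
  ((countable_setOf_inLattice τ).isConnected_compl_of_one_lt_rank (by simp)).isPreconnected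

theorem dense_setOf_not_inLattice (τ : ℂ) : Dense {z | ¬ InLattice τ z} :=
  (countable_setOf_inLattice τ).dense_compl ℝ

theorem isCompact_range_of_doubly_periodic {X : Type*} [TopologicalSpace X] (hτ : 0 < τ.im)
    {f : ℂ → X} (hf : Continuous f) (h_one : Function.Periodic f 1)
    (h_tau : Function.Periodic f τ) : IsCompact (Set.range f) := by
  refine IsZLattice.isCompact_range_of_periodic (upperHalfPeriodPair hτ).lattice f hf ?_
  intro z ω hω
  obtain ⟨m, n, rfl⟩ := (mem_lattice_upperHalfPeriodPair hτ).1 hω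
  rw [← add_assoc, h_tau.int_mul n, ← mul_one (m : ℂ), h_one.int_mul m]

end Lattice

/-- `g` has the absolute value of a theta function of degree `d` for the lattice `ℤ + ℤτ`: up to
phases, `g` is invariant under `z ↦ z + 1` and is multiplied by `exp (-2πi d (z + τ / 2))` under
`z ↦ z + τ`. Only absolute values are recorded, as this is all that Liouville's theorem needs. -/
structure HasThetaDegree (τ : ℂ) (d : ℝ) (g : ℂ → ℂ) : Prop where
  norm_add_one (z : ℂ) : ‖g (z + 1)‖ = ‖g z‖
  norm_add_tau (z : ℂ) : ‖g (z + τ)‖ = Real.exp (2 * Real.pi * d * (z + τ / 2).im) * ‖g z‖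

section ThetaDegree

variable {τ : ℂ} {f g q : ℂ → ℂ} {d₁ d₂ d : ℝ}

theorem HasThetaDegree.of_eq (h_one : ∀ z, g (z + 1) = -g z)
    (h_tau : ∀ z, g (z + τ) = -(cexp (-(2 * Real.pi * I * d * (z + τ / 2))) * g z)) :
    HasThetaDegree τ d g where
  norm_add_one z := by rw [h_one, norm_neg]
  norm_add_tau z := by
    rw [h_tau, norm_neg, norm_mul, Complex.norm_exp,
      show -(2 * Real.pi * I * d * (z + τ / 2)) =
        ((-(2 * Real.pi * d) : ℝ) : ℂ) * (z + τ / 2) * I by push_cast; ring,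
      Complex.mul_I_re, Complex.im_ofReal_mul, ← neg_mul, neg_neg]

theorem hasThetaDegree_oddTheta (τ : ℂ) : HasThetaDegree τ 1 (oddTheta τ) :=
  .of_eq (oddTheta_add_one τ) fun z ↦ by rw [oddTheta_add_tau, ofReal_one, mul_one]

theorem exists_int_mul_sub_eq_of_add_eq {η₁ η₂ z : ℂ}
    (h_one : ∀ z, f (z + 1) = -(cexp (η₁ * (z + 1 / 2)) * f z))
    (h_tau : ∀ z, f (z + τ) = -(cexp (η₂ * (z + τ / 2)) * f z)) (hz : f z ≠ 0) :
    ∃ k : ℤ, η₁ * τ - η₂ = k * (2 * Real.pi * I) := by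
  have hcomm : cexp (η₁ * (z + τ + 1 / 2) + η₂ * (z + τ / 2)) =
      cexp (η₂ * (z + 1 + τ / 2) + η₁ * (z + 1 / 2)) := by
    have h := congrArg f (add_right_comm z τ 1)
    rw [h_one, h_tau, h_tau, h_one] at h
    refine mul_right_cancel₀ hz ?_
    rw [Complex.exp_add, Complex.exp_add]
    linear_combination h
  obtain ⟨k, hk⟩ := Complex.exp_eq_exp_iff_exists_int.1 hcomm
  exact ⟨k, by linear_combination hk⟩

theorem exists_int_hasThetaDegree {η₁ η₂ z : ℂ}
    (h_one : ∀ z, f (z + 1) = -(cexp (η₁ * (z + 1 / 2)) * f z))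
    (h_tau : ∀ z, f (z + τ) = -(cexp (η₂ * (z + τ / 2)) * f z)) (hz : f z ≠ 0) :
    ∃ k : ℤ, HasThetaDegree τ k fun z ↦ cexp (-(η₁ * z ^ 2 / 2)) * f z := by
  obtain ⟨k, hk⟩ := exists_int_mul_sub_eq_of_add_eq h_one h_tau hz
  refine ⟨k, .of_eq (fun z ↦ ?_) fun z ↦ ?_⟩
  · rw [h_one, mul_neg, ← mul_assoc, ← Complex.exp_add]
    ring_nf
  · rw [h_tau, mul_neg, ← mul_assoc, ← mul_assoc, ← Complex.exp_add, ← Complex.exp_add]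
    congr 3
    push_cast
    linear_combination -(z + τ / 2) * hk

theorem HasThetaDegree.of_eq_mul (hf : HasThetaDegree τ d₁ f) (hg : HasThetaDegree τ d₂ g)
    (hq : Continuous q) (hfq : ∀ z, f z = q z * g z) (hdense : Dense {z | g z ≠ 0}) :
    HasThetaDegree τ (d₁ - d₂) q where
  norm_add_one := by
    refine congrFun (Continuous.ext_on hdense (by fun_prop) (by fun_prop) fun z hz ↦ ?_)
    have h := hf.norm_add_one z
    rw [hfq, hfq, norm_mul, norm_mul, hg.norm_add_one] at h
    exact mul_right_cancel₀ (norm_ne_zero_iff.2 hz) h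
  norm_add_tau := by
    refine congrFun (Continuous.ext_on hdense (by fun_prop) (by fun_prop) fun z hz ↦ ?_)
    have h := hf.norm_add_tau z
    rw [hfq, hfq, norm_mul, norm_mul, hg.norm_add_tau, ← mul_assoc, ← mul_assoc] at h
    replace h := mul_right_cancel₀ (norm_ne_zero_iff.2 hz) h
    rw [← eq_div_iff (Real.exp_ne_zero _), mul_div_right_comm, ← Real.exp_sub] at h
    convert h using 3
    ring

theorem HasThetaDegree.apply_eq_apply (hg : HasThetaDegree τ d g) (hτ : 0 < τ.im) (hd : d ≤ 0)
    (hgd : Differentiable ℂ g) (z w : ℂ) : g z = g w := by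
  -- The Gaussian factor makes the norm doubly periodic, and is at least `1` because `d ≤ 0`.
  have hcompact : IsCompact (Set.range fun z ↦
      ‖g z‖ * Real.exp (-(Real.pi * d * z.im ^ 2 / τ.im))) := by
    refine isCompact_range_of_doubly_periodic hτ (by have := hgd.continuous; fun_prop)
      (fun z ↦ by simp [hg.norm_add_one]) fun z ↦ ?_
    rw [hg.norm_add_tau, mul_comm (Real.exp _), mul_assoc, ← Real.exp_add]
    congr 2
    have : τ.im ≠ 0 := hτ.ne'
    simp only [add_im, div_ofNat_im]
    field_simp
    ring
  obtain ⟨M, hM⟩ := hcompact.bddAbove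
  refine hgd.apply_eq_apply_of_bounded (isBounded_iff_forall_norm_le.2 ⟨M, ?_⟩) z w
  rintro _ ⟨u, rfl⟩
  refine le_trans (le_mul_of_one_le_right (norm_nonneg _) (Real.one_le_exp ?_)) (hM ⟨u, rfl⟩)
  rw [← neg_div, ← neg_mul, ← mul_neg]
  have := neg_nonneg.2 hd
  positivity

theorem HasThetaDegree.exists_eq_const_mul (hf : HasThetaDegree τ d₁ f)
    (hg : HasThetaDegree τ d₂ g) (hτ : 0 < τ.im) (hle : d₁ ≤ d₂) (hfd : Differentiable ℂ f)
    (hgd : Differentiable ℂ g) (hdense : Dense {z | g z ≠ 0})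
    (horder : ∀ z, analyticOrderAt g z ≤ analyticOrderAt f z) : ∃ c, ∀ z, f z = c * g z := by
  obtain ⟨q, hq, hfq⟩ := exists_analyticOnNhd_mul_eq (U := Set.univ) (fun z _ ↦ hfd.analyticAt z)
    (fun z _ ↦ hgd.analyticAt z) fun z _ ↦ horder z
  have hqd : Differentiable ℂ q := fun z ↦ (hq z trivial).differentiableAt
  have hqdeg := hf.of_eq_mul hg hqd.continuous (fun z ↦ hfq trivial) hdense
  refine ⟨q 0, fun z ↦ ?_⟩
  rw [← hqdeg.apply_eq_apply hτ (sub_nonpos.2 hle) hqd z 0]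
  exact hfq trivial

end ThetaDegree

section WeierstrassFunctions

variable {zeta sigma : ℂ → ℂ → ℂ} {τ : ℂ}

theorem IsWeierstrassZeta.analyticAt (hzeta : IsWeierstrassZeta zeta) (hτ : 0 < τ.im) {z : ℂ}
    (hz : ¬ InLattice τ z) : AnalyticAt ℂ (zeta τ) z :=
  DifferentiableOn.analyticAt (s := {w | ¬ InLattice τ w})
    (fun w hw ↦ ((hzeta τ hτ).2.1 w hw).differentiableAt.differentiableWithinAt)
    ((isOpen_setOf_not_inLattice hτ).mem_nhds hz)

theorem IsWeierstrassZeta.exists_add_eq (hzeta : IsWeierstrassZeta zeta) (hτ : 0 < τ.im) {ω : ℂ}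
    (hω : InLattice τ ω) : ∃ η, ∀ z, ¬ InLattice τ z → zeta τ (z + ω) = zeta τ z + η := by
  have hderiv (z : ℂ) (hz : ¬ InLattice τ z) : HasDerivAt (zeta τ) (-wp τ z) z :=
    (hzeta τ hτ).2.1 z hz
  have hderiv_add (z : ℂ) (hz : ¬ InLattice τ z) :
      HasDerivAt (fun w ↦ zeta τ (w + ω)) (-wp τ z) z := by
    rw [← hω.wp_add hτ]
    exact (hderiv _ ((hω.add_iff z).not.2 hz)).comp_add_const z ω
  exact (isOpen_setOf_not_inLattice hτ).exists_eq_add_of_deriv_eq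
    (isPreconnected_setOf_not_inLattice τ)
    (fun z hz ↦ (hderiv_add z hz).differentiableAt.differentiableWithinAt)
    (fun z hz ↦ (hderiv z hz).differentiableAt.differentiableWithinAt)
    fun z hz ↦ (hderiv_add z hz).deriv.trans (hderiv z hz).deriv.symm

theorem IsWeierstrassSigma.apply_zero (hsigma : IsWeierstrassSigma zeta sigma) (hτ : 0 < τ.im) :
    sigma τ 0 = 0 := by
  simpa only [neg_zero, self_eq_neg] using (hsigma τ hτ).1 0

theorem IsWeierstrassSigma.hasDerivAt_zero (hsigma : IsWeierstrassSigma zeta sigma)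
    (hτ : 0 < τ.im) : HasDerivAt (sigma τ) 1 0 := by
  rw [hasDerivAt_iff_tendsto_slope]
  refine (hsigma τ hτ).2.2.2.congr fun z ↦ ?_
  rw [slope_def_field, hsigma.apply_zero hτ, sub_zero, sub_zero]

theorem IsWeierstrassSigma.ne_zero (hsigma : IsWeierstrassSigma zeta sigma)
    (hzeta : IsWeierstrassZeta zeta) (hτ : 0 < τ.im) {z : ℂ} (hz : ¬ InLattice τ z) :
    sigma τ z ≠ 0 := by
  obtain ⟨-, hdiff, hderiv, -⟩ := hsigma τ hτ
  intro h0
  have hlog : deriv (sigma τ) =ᶠ[𝓝 z] zeta τ * sigma τ := by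
    filter_upwards [(isOpen_setOf_not_inLattice hτ).mem_nhds hz] with w hw using (hderiv w hw).deriv
  have hzero : sigma τ = 0 := AnalyticOnNhd.eq_of_eventuallyEq (fun w _ ↦ hdiff.analyticAt w)
    (fun w _ ↦ analyticAt_const)
    (eventually_eq_zero_of_deriv_eq_mul (hdiff.analyticAt z) (hzeta.analyticAt hτ hz) hlog h0)
  have h := (hsigma.hasDerivAt_zero hτ).deriv
  rw [hzero, deriv_zero] at h
  exact zero_ne_one h

theorem IsWeierstrassSigma.dense_ne_zero (hsigma : IsWeierstrassSigma zeta sigma)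
    (hzeta : IsWeierstrassZeta zeta) (hτ : 0 < τ.im) : Dense {z | sigma τ z ≠ 0} :=
  (dense_setOf_not_inLattice τ).mono fun _ hz ↦ hsigma.ne_zero hzeta hτ hz

theorem IsWeierstrassSigma.exists_add_eq (hsigma : IsWeierstrassSigma zeta sigma)
    (hzeta : IsWeierstrassZeta zeta) (hτ : 0 < τ.im) {ω η : ℂ} (hω : InLattice τ ω)
    (hη : ∀ z, ¬ InLattice τ z → zeta τ (z + ω) = zeta τ z + η) :
    ∃ C ≠ 0, ∀ z, sigma τ (z + ω) = C * cexp (η * z) * sigma τ z := by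
  obtain ⟨-, hdiff, hderiv, -⟩ := hsigma τ hτ
  have hω_notMem {z : ℂ} (hz : ¬ InLattice τ z) : ¬ InLattice τ (z + ω) := (hω.add_iff z).not.2 hz
  have hlog : Set.EqOn (logDeriv fun z ↦ sigma τ (z + ω))
      (logDeriv fun z ↦ cexp (η * z) * sigma τ z) {z | ¬ InLattice τ z} := by
    intro z hz
    have hexp : HasDerivAt (fun w ↦ cexp (η * w)) (cexp (η * z) * η) z := by
      simpa using ((hasDerivAt_id z).const_mul η).cexp
    have hne := hsigma.ne_zero hzeta hτ hz
    have hne_add := hsigma.ne_zero hzeta hτ (hω_notMem hz)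
    rw [logDeriv_apply, logDeriv_apply, ((hderiv _ (hω_notMem hz)).comp_add_const z ω).deriv,
      (hexp.fun_mul (hderiv z hz)).deriv, hη z hz]
    field_simp
    ring
  obtain ⟨C, hC, hCeq⟩ := (logDeriv_eqOn_iff
    (by fun_prop) (by fun_prop) (isOpen_setOf_not_inLattice hτ)
    (isPreconnected_setOf_not_inLattice τ)
    (fun z hz ↦ mul_ne_zero (Complex.exp_ne_zero _) (hsigma.ne_zero hzeta hτ hz))
    fun z hz ↦ hsigma.ne_zero hzeta hτ (hω_notMem hz)).1 hlog
  have hcont := hdiff.continuous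
  refine ⟨C, hC, congrFun (Continuous.ext_on (dense_setOf_not_inLattice τ) (by fun_prop)
    (by fun_prop) fun z hz ↦ ?_)⟩
  rw [mul_assoc]
  exact hCeq hz

theorem IsWeierstrassSigma.add_eq_neg (hsigma : IsWeierstrassSigma zeta sigma)
    (hzeta : IsWeierstrassZeta zeta) (hτ : 0 < τ.im) {ω η : ℂ} (hω : InLattice τ ω)
    (hω2 : ¬ InLattice τ (ω / 2))
    (hη : ∀ z, ¬ InLattice τ z → zeta τ (z + ω) = zeta τ z + η) (z : ℂ) :
    sigma τ (z + ω) = -(cexp (η * (z + ω / 2)) * sigma τ z) := by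
  obtain ⟨C, -, hC⟩ := hsigma.exists_add_eq hzeta hτ hω hη
  -- Oddness determines `C`, by evaluation at `-ω / 2`.
  have hCexp : C = -cexp (η * (ω / 2)) := by
    have h := hC (-(ω / 2))
    rw [neg_add_eq_sub, sub_half, (hsigma τ hτ).1, mul_neg, ← neg_mul] at h
    have hone := mul_right_cancel₀ (hsigma.ne_zero hzeta hτ hω2) ((one_mul _).trans h)
    calc C = C * cexp (η * -(ω / 2)) * cexp (η * (ω / 2)) := by
          rw [mul_assoc, ← Complex.exp_add, mul_neg, neg_add_cancel, Complex.exp_zero, mul_one]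
      _ = -cexp (η * (ω / 2)) := by linear_combination cexp (η * (ω / 2)) * hone
  rw [hC, hCexp, mul_add, Complex.exp_add]
  ring

theorem IsWeierstrassSigma.analyticOrderAt_eq_one (hsigma : IsWeierstrassSigma zeta sigma)
    (hzeta : IsWeierstrassZeta zeta) (hτ : 0 < τ.im) {ω : ℂ} (hω : InLattice τ ω) :
    analyticOrderAt (sigma τ) ω = 1 := by
  obtain ⟨η, hη⟩ := hzeta.exists_add_eq hτ hω
  obtain ⟨C, hC, hadd⟩ := hsigma.exists_add_eq hzeta hτ hω hη
  have hana (z : ℂ) : AnalyticAt ℂ (sigma τ) z := (hsigma τ hτ).2.1.analyticAt z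
  have hunit : AnalyticAt ℂ (fun z ↦ C * cexp (η * z)) 0 := by fun_prop
  have hshift : AnalyticAt ℂ (fun z ↦ z + ω) 0 := by fun_prop
  have hzero : analyticOrderAt (sigma τ) 0 = 1 :=
    (hana 0).analyticOrderAt_eq_one_of_zero_deriv_ne_zero (hsigma.apply_zero hτ)
      (by rw [(hsigma.hasDerivAt_zero hτ).deriv]; exact one_ne_zero)
  calc analyticOrderAt (sigma τ) ω
      = analyticOrderAt (sigma τ ∘ (· + ω)) 0 := by
        rw [analyticOrderAt_comp_of_deriv_ne_zero hshift (by simp), zero_add]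
    _ = analyticOrderAt ((fun z ↦ C * cexp (η * z)) * sigma τ) 0 := by
        congr 1
        exact funext hadd
    _ = 1 := by
        rw [analyticOrderAt_mul hunit (hana 0), hzero,
          hunit.analyticOrderAt_eq_zero.2 (mul_ne_zero hC (Complex.exp_ne_zero _)), zero_add]

theorem IsWeierstrassSigma.analyticOrderAt_le_oddTheta (hsigma : IsWeierstrassSigma zeta sigma)
    (hzeta : IsWeierstrassZeta zeta) (hτ : 0 < τ.im) (z : ℂ) :
    analyticOrderAt (sigma τ) z ≤ analyticOrderAt (oddTheta τ) z := by
  have hθ := (differentiable_oddTheta hτ).analyticAt z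
  by_cases hz : InLattice τ z
  · rw [hsigma.analyticOrderAt_eq_one hzeta hτ hz, Order.one_le_iff_ne_zero,
      hθ.analyticOrderAt_ne_zero]
    exact oddTheta_eq_zero hz
  · rw [((hsigma τ hτ).2.1.analyticAt z).analyticOrderAt_eq_zero.2 (hsigma.ne_zero hzeta hτ hz)]
    exact zero_le

theorem IsWeierstrassSigma.exists_hasThetaDegree (hsigma : IsWeierstrassSigma zeta sigma)
    (hzeta : IsWeierstrassZeta zeta) (hτ : 0 < τ.im) {η : ℂ}
    (hη : ∀ z, ¬ InLattice τ z → zeta τ (z + 1) = zeta τ z + η) :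
    ∃ k : ℤ, HasThetaDegree τ k fun z ↦ cexp (-(η * z ^ 2 / 2)) * sigma τ z := by
  obtain ⟨η₂, hη₂⟩ := hzeta.exists_add_eq hτ (inLattice_tau τ)
  have h_one := hsigma.add_eq_neg hzeta hτ (inLattice_one τ) (not_inLattice_one_div_two hτ) hη
  have h_tau := hsigma.add_eq_neg hzeta hτ (inLattice_tau τ) (not_inLattice_tau_div_two hτ) hη₂
  exact exists_int_hasThetaDegree h_one h_tau
    (hsigma.ne_zero hzeta hτ (not_inLattice_one_div_two hτ))

theorem IsWeierstrassSigma.exists_oddTheta_eq (hsigma : IsWeierstrassSigma zeta sigma)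
    (hzeta : IsWeierstrassZeta zeta) (hτ : 0 < τ.im) {η : ℂ}
    (hη : ∀ z, ¬ InLattice τ z → zeta τ (z + 1) = zeta τ z + η) :
    ∃ c ≠ 0, ∀ z, oddTheta τ z = c * (cexp (-(η * z ^ 2 / 2)) * sigma τ z) := by
  obtain ⟨k, hk⟩ := hsigma.exists_hasThetaDegree hzeta hτ hη
  have hdiff : Differentiable ℂ (sigma τ) := (hsigma τ hτ).2.1
  have hgauss : Differentiable ℂ fun z ↦ cexp (-(η * z ^ 2 / 2)) := by fun_prop
  have hk_pos : 0 < k := by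
    by_contra! hk0
    have h := hk.apply_eq_apply hτ (by exact_mod_cast hk0) (hgauss.fun_mul hdiff) (1 / 2) 0
    rw [hsigma.apply_zero hτ, mul_zero] at h
    exact mul_ne_zero (Complex.exp_ne_zero _)
      (hsigma.ne_zero hzeta hτ (not_inLattice_one_div_two hτ)) h
  have horder (z : ℂ) : analyticOrderAt (fun z ↦ cexp (-(η * z ^ 2 / 2)) * sigma τ z) z ≤
      analyticOrderAt (oddTheta τ) z := by
    have h := analyticOrderAt_mul (hgauss.analyticAt z) (hdiff.analyticAt z)
    rw [(hgauss.analyticAt z).analyticOrderAt_eq_zero.2 (Complex.exp_ne_zero _), zero_add] at h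
    exact h.trans_le (hsigma.analyticOrderAt_le_oddTheta hzeta hτ z)
  obtain ⟨c, hc⟩ := (hasThetaDegree_oddTheta τ).exists_eq_const_mul hk hτ
    (by exact_mod_cast hk_pos) (differentiable_oddTheta hτ) (hgauss.fun_mul hdiff)
    ((hsigma.dense_ne_zero hzeta hτ).mono fun z hz ↦ mul_ne_zero (Complex.exp_ne_zero _) hz) horder
  refine ⟨c, ?_, hc⟩
  rintro rfl
  obtain ⟨z, hz⟩ := exists_oddTheta_ne_zero hτ
  exact hz ((hc z).trans (zero_mul _))

end WeierstrassFunctions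

theorem hasDerivAt_div_of_eq_mul {𝕜 : Type*} [NontriviallyNormedField 𝕜] {f g : 𝕜 → 𝕜}
    {x A B : 𝕜} (hf : HasDerivAt f (A * f x) x) (hg : HasDerivAt g (B * g x) x) (hx : g x ≠ 0) :
    HasDerivAt (fun y ↦ f y / g y) ((A - B) * (f x / g x)) x := by
  refine (hf.fun_div hg hx).congr_deriv ?_
  field_simp

section ThetaQuotient

variable {zeta sigma : ℂ → ℂ → ℂ} {τ η z : ℂ}

theorem IsWeierstrassSigma.oddTheta_ne_zero (hsigma : IsWeierstrassSigma zeta sigma)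
    (hzeta : IsWeierstrassZeta zeta) (hτ : 0 < τ.im)
    (hη : ∀ z, ¬ InLattice τ z → zeta τ (z + 1) = zeta τ z + η) (hz : ¬ InLattice τ z) :
    oddTheta τ z ≠ 0 := by
  obtain ⟨c, hc, hθ⟩ := hsigma.exists_oddTheta_eq hzeta hτ hη
  rw [hθ]
  exact mul_ne_zero hc (mul_ne_zero (Complex.exp_ne_zero _) (hsigma.ne_zero hzeta hτ hz))

theorem IsWeierstrassSigma.deriv_oddTheta (hsigma : IsWeierstrassSigma zeta sigma)
    (hzeta : IsWeierstrassZeta zeta) (hτ : 0 < τ.im)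
    (hη : ∀ z, ¬ InLattice τ z → zeta τ (z + 1) = zeta τ z + η) (hz : ¬ InLattice τ z) :
    deriv (oddTheta τ) z = (zeta τ z - η * z) * oddTheta τ z := by
  obtain ⟨c, -, hθ⟩ := hsigma.exists_oddTheta_eq hzeta hτ hη
  have hsq : HasDerivAt (fun w ↦ -(η * w ^ 2 / 2)) (-(η * z)) z := by
    refine (((hasDerivAt_pow 2 z).const_mul η).div_const 2).neg.congr_deriv ?_
    push_cast
    ring
  have hσ : HasDerivAt (sigma τ) (zeta τ z * sigma τ z) z := (hsigma τ hτ).2.2.1 z hz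
  rw [hθ, funext hθ, ((hsq.cexp.fun_mul hσ).const_mul c).deriv]
  ring

theorem IsWeierstrassSigma.deriv_deriv_oddTheta (hsigma : IsWeierstrassSigma zeta sigma)
    (hzeta : IsWeierstrassZeta zeta) (hτ : 0 < τ.im)
    (hη : ∀ z, ¬ InLattice τ z → zeta τ (z + 1) = zeta τ z + η) (hz : ¬ InLattice τ z) :
    deriv (deriv (oddTheta τ)) z = ((zeta τ z - η * z) ^ 2 - wp τ z - η) * oddTheta τ z := by
  have hderiv : deriv (oddTheta τ) =ᶠ[𝓝 z] fun w ↦ (zeta τ w - η * w) * oddTheta τ w := by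
    filter_upwards [(isOpen_setOf_not_inLattice hτ).mem_nhds hz] with w hw
    exact hsigma.deriv_oddTheta hzeta hτ hη hw
  have hζ : HasDerivAt (fun w ↦ zeta τ w - η * w) (-wp τ z - η) z := by
    simpa only [id, mul_one] using
      ((hzeta τ hτ).2.1 z hz).fun_sub ((hasDerivAt_id z).const_mul η)
  have hθ : HasDerivAt (oddTheta τ) ((zeta τ z - η * z) * oddTheta τ z) z :=
    hsigma.deriv_oddTheta hzeta hτ hη hz ▸ (differentiable_oddTheta hτ z).hasDerivAt
  rw [hderiv.deriv_eq, (hζ.fun_mul hθ).deriv]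
  ring

theorem IsWeierstrassSigma.hasDerivAt_oddTheta_comp (hsigma : IsWeierstrassSigma zeta sigma)
    (hzeta : IsWeierstrassZeta zeta) (hτ : 0 < τ.im)
    (hη : ∀ z, ¬ InLattice τ z → zeta τ (z + 1) = zeta τ z + η) {w : ℂ → ℂ} {w' : ℂ}
    (hw : HasDerivAt w w' τ) (hwτ : ¬ InLattice τ (w τ)) :
    HasDerivAt (fun t ↦ oddTheta t (w t))
      ((w' * (zeta τ (w τ) - η * w τ) +
        ((zeta τ (w τ) - η * w τ) ^ 2 - wp τ (w τ) - η) / (4 * Real.pi * I)) *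
          oddTheta τ (w τ)) τ := by
  refine (_root_.hasDerivAt_oddTheta_comp hτ hw).congr_deriv ?_
  rw [hsigma.deriv_oddTheta hzeta hτ hη hwτ, hsigma.deriv_deriv_oddTheta hzeta hτ hη hwτ]
  ring

theorem IsWeierstrassSigma.exp_mul_div_eq_oddTheta_div (hsigma : IsWeierstrassSigma zeta sigma)
    (hzeta : IsWeierstrassZeta zeta) (hτ : 0 < τ.im)
    (hη : ∀ z, ¬ InLattice τ z → zeta τ (z + 1) = zeta τ z + η) (z a : ℂ) :
    cexp (2 * z * a * η) * sigma τ (z - a) / sigma τ (z + a) =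
      oddTheta τ (z - a) / oddTheta τ (z + a) := by
  obtain ⟨c, hc, hθ⟩ := hsigma.exists_oddTheta_eq hzeta hτ hη
  rw [hθ, hθ, mul_div_mul_left _ _ hc, mul_div_mul_comm, ← Complex.exp_sub, mul_div_assoc]
  ring_nf

end ThetaQuotient

theorem tau_deriv_log_f_general {zeta sigma : ℂ → ℂ → ℂ} {eta1 a : ℂ → ℂ} {τ a' z : ℂ}
    (hzeta : IsWeierstrassZeta zeta) (hsigma : IsWeierstrassSigma zeta sigma)
    (heta1 : IsEta1 zeta eta1) (hτ : 0 < τ.im) (ha : HasDerivAt a a' τ)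
    (hsub : ¬ InLattice τ (z - a τ)) (hadd : ¬ InLattice τ (z + a τ)) (κ : ℂ) :
    HasDerivAt
      (fun t ↦ cexp (2 * z * a t * eta1 t - κ) * sigma t (z - a t) / sigma t (z + a t))
      (((I / (4 * Real.pi)) *
          ((zeta τ (z + a τ) - zeta τ (z - a τ) - 2 * eta1 τ * a τ + 4 * Real.pi * I * a')
            * (zeta τ (z - a τ) + zeta τ (z + a τ) - 2 * z * eta1 τ))
        + (I / (4 * Real.pi)) * (wp τ (z - a τ) - wp τ (z + a τ)))
        * (cexp (2 * z * a τ * eta1 τ - κ) * sigma τ (z - a τ) / sigma τ (z + a τ))) τ := by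
  have hη {t : ℂ} (ht : 0 < t.im) (w : ℂ) (hw : ¬ InLattice t w) :
      zeta t (w + 1) = zeta t w + eta1 t := by
    rw [heta1 t ht w hw, add_sub_cancel]
  have hf {t : ℂ} (ht : 0 < t.im) :
      cexp (2 * z * a t * eta1 t - κ) * sigma t (z - a t) / sigma t (z + a t) =
        cexp (-κ) * (oddTheta t (z - a t) / oddTheta t (z + a t)) := by
    rw [← hsigma.exp_mul_div_eq_oddTheta_div hzeta ht (hη ht), sub_eq_neg_add, Complex.exp_add]
    ring
  have hτ_near : ∀ᶠ t in 𝓝 τ, 0 < t.im := continuous_im.continuousAt.eventually_const_lt hτ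
  have hθ_sub := hsigma.hasDerivAt_oddTheta_comp hzeta hτ (hη hτ) (ha.const_sub z) hsub
  have hθ_add := hsigma.hasDerivAt_oddTheta_comp hzeta hτ (hη hτ) (ha.const_add z) hadd
  have hquot := hasDerivAt_div_of_eq_mul hθ_sub hθ_add
    (hsigma.oddTheta_ne_zero hzeta hτ (hη hτ) hadd)
  refine ((hquot.const_mul (cexp (-κ))).congr_of_eventuallyEq
    (hτ_near.mono fun _ ↦ hf)).congr_deriv ?_
  have hI : I / (4 * Real.pi) = -(1 / (4 * Real.pi * I)) := by
    rw [one_div, mul_inv, inv_I, mul_neg, neg_neg, div_eq_inv_mul]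
  rw [hf hτ, hI, mul_left_comm]
  congr 1
  field_simp
  ring

/-- formula (173): the `τ`-logarithmic derivative of
`f(z;τ) = e^{2za₁η₁ - 4πisz} σ(z-a₁)/σ(z+a₁)` with `a₁ = r + sτ`, stated in the form
`∂f/∂τ = (∂/∂τ log f) · f`. -/
theorem tau_deriv_log_f
    (r s : ℂ)
    (zeta sigma : ℂ → ℂ → ℂ) (eta1 : ℂ → ℂ)
    (hzeta : IsWeierstrassZeta zeta) (hsigma : IsWeierstrassSigma zeta sigma)
    (heta1 : IsEta1 zeta eta1) :
    ∀ τ : ℂ, 0 < τ.im → ¬ InLattice τ (r + s * τ) →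
    ∀ z : ℂ, ¬ InLattice τ (z - (r + s * τ)) → ¬ InLattice τ (z + (r + s * τ)) →
    HasDerivAt
      (fun t => Complex.exp (2 * z * (r + s * t) * eta1 t
          - 4 * (Real.pi : ℂ) * Complex.I * s * z)
        * sigma t (z - (r + s * t)) / sigma t (z + (r + s * t)))
      ((((Complex.I / (4 * (Real.pi : ℂ))) *
          ((zeta τ (z + (r + s * τ)) - zeta τ (z - (r + s * τ))
              - 2 * eta1 τ * (r + s * τ) + 4 * (Real.pi : ℂ) * Complex.I * s)
            * (zeta τ (z - (r + s * τ)) + zeta τ (z + (r + s * τ)) - 2 * z * eta1 τ)))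
        + (Complex.I / (4 * (Real.pi : ℂ))) *
            (wp τ (z - (r + s * τ)) - wp τ (z + (r + s * τ))))
        * (Complex.exp (2 * z * (r + s * τ) * eta1 τ
            - 4 * (Real.pi : ℂ) * Complex.I * s * z)
          * sigma τ (z - (r + s * τ)) / sigma τ (z + (r + s * τ)))) τ := by
  intro τ hτ _ z hsub hadd
  have ha : HasDerivAt (fun t ↦ r + s * t) s τ := by
    simpa using ((hasDerivAt_id τ).const_mul s).const_add r
  exact tau_deriv_log_f_general hzeta hsigma heta1 hτ ha hsub hadd _
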